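/- Let g : ℝ^n → [0,∞) be continuous and α be a locally Lipschitz class K function. For every x ∈ ℝ^n and T ≥ 0, let S(x,T) = sup over pairs (u, ξ) of control signals u ∈ 𝕌 and admissible trajectories ξ from x under u of min_{t ∈ [0,T]} β_α(g(ξ(t)), T − t). Then 0 ≤ S(x,T) ≤ β_α(g(x), T), and there exists a unique v ∈ [0,∞) such that β_α(v, T) = S(x,T); moreover this v lies in [0, g(x)]. -/

import Mathlib

/-!
For fixed `T`, the flow map `r ↦ β_α(r,T)` is continuous, by Grönwall's inequality, and injective,
by backward uniqueness for `y' = -α(y)`: each `[0,R]` is invariant, and `α` is Lipschitz there. As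
the flow map fixes `0`, the intermediate value theorem makes `[0, g x]` cover `[0, β_α(g x, T)]`.
The payoff lies in the latter interval, because every trajectory starts at `x` and the time `t = 0`
contributes `β_α(g x, T)` to its minimum.
-/

open Set Filter MeasureTheory Topology

noncomputable section

/-- `α : [0,∞) → [0,∞)` is a class `K` function: continuous, strictly increasing, `α 0 = 0`. -/
def IsClassK (α : ℝ → ℝ) : Prop :=
  ContinuousOn α (Set.Ici 0) ∧ StrictMonoOn α (Set.Ici 0) ∧ α 0 = 0

/-- `α` is a locally Lipschitz class `K` function on `[0,∞)`. -/
def IsLocallyLipschitzClassK (α : ℝ → ℝ) : Prop :=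
  IsClassK α ∧
    ∀ x ∈ Set.Ici (0 : ℝ), ∃ K : NNReal, ∃ s ∈ nhdsWithin x (Set.Ici (0 : ℝ)),
      LipschitzOnWith K α s

/-- `β` is the function `β_α`: for each `r ≥ 0`, `t ↦ β r t` solves `y' = -α y`, `y 0 = r`,
staying in `[0, r]` for all `t ≥ 0`. -/
def IsBetaFor (α : ℝ → ℝ) (β : ℝ → ℝ → ℝ) : Prop :=
  ∀ r : ℝ, 0 ≤ r →
    β r 0 = r ∧ ∀ t : ℝ, 0 ≤ t →
      0 ≤ β r t ∧ β r t ≤ r ∧ HasDerivWithinAt (β r) (-α (β r t)) (Set.Ici 0) t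

/-- `u` is an admissible control signal: measurable, valued in `U` on `[0,∞)`. -/
def IsControl {m : ℕ} (U : Set (Fin m → ℝ)) (u : ℝ → Fin m → ℝ) : Prop :=
  Measurable u ∧ ∀ t : ℝ, 0 ≤ t → u t ∈ U

/-- `ξ` is an admissible trajectory from `x` under the control signal `u`. -/
def IsTrajectory {n m : ℕ} (f : (Fin n → ℝ) → (Fin m → ℝ) → Fin n → ℝ)
    (x : Fin n → ℝ) (u : ℝ → Fin m → ℝ) (ξ : ℝ → Fin n → ℝ) : Prop :=
  Continuous ξ ∧ ∀ t : ℝ, 0 ≤ t → ξ t = x + ∫ s in (0 : ℝ)..t, f (ξ s) (u s)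

/-- The anti-discounted payoff defining the CB-VF: the supremum over control signals `u`
and admissible trajectories `ξ` from `x` of `min_{t ∈ [0,T]} β_α (g (ξ t)) (T - t)`. -/
def cbvfPayoff {n m : ℕ} (f : (Fin n → ℝ) → (Fin m → ℝ) → Fin n → ℝ)
    (U : Set (Fin m → ℝ)) (β : ℝ → ℝ → ℝ) (g : (Fin n → ℝ) → ℝ)
    (x : Fin n → ℝ) (T : ℝ) : ℝ :=
  sSup {y : ℝ | ∃ u ξ, IsControl U u ∧ IsTrajectory f x u ξ ∧
    y = sInf ((fun t => β (g (ξ t)) (T - t)) '' Set.Icc 0 T)}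

namespace IsBetaFor

variable {α : ℝ → ℝ} {β : ℝ → ℝ → ℝ} {r s t R T : ℝ} {K : NNReal}

theorem apply_zero (hβ : IsBetaFor α β) (hr : 0 ≤ r) : β r 0 = r :=
  (hβ r hr).1

theorem mem_Icc (hβ : IsBetaFor α β) (hr : 0 ≤ r) (ht : 0 ≤ t) : β r t ∈ Icc 0 r :=
  ⟨((hβ r hr).2 t ht).1, ((hβ r hr).2 t ht).2.1⟩

theorem hasDerivWithinAt (hβ : IsBetaFor α β) (hr : 0 ≤ r) (ht : 0 ≤ t) :
    HasDerivWithinAt (β r) (-α (β r t)) (Ici 0) t :=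
  ((hβ r hr).2 t ht).2.2

theorem continuousOn (hβ : IsBetaFor α β) (hr : 0 ≤ r) : ContinuousOn (β r) (Ici 0) :=
  fun _ ht => (hβ.hasDerivWithinAt hr ht).continuousWithinAt

theorem mapsTo_Icc (hβ : IsBetaFor α β) (ht : 0 ≤ t) :
    MapsTo (fun r => β r t) (Icc 0 R) (Icc 0 R) :=
  fun _ hr => Icc_subset_Icc_right hr.2 (hβ.mem_Icc hr.1 ht)

theorem dist_le_dist_mul_exp (hβ : IsBetaFor α β) (hK : LipschitzOnWith K α (Icc 0 R))
    (hr : r ∈ Icc 0 R) (hs : s ∈ Icc 0 R) (hT : 0 ≤ T) :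
    dist (β r T) (β s T) ≤ dist r s * Real.exp (K * T) := by
  have hderiv (q : ℝ) (hq : q ∈ Icc 0 R) (t : ℝ) (ht : t ∈ Ico 0 T) :
      HasDerivWithinAt (β q) (-α (β q t)) (Ici t) t :=
    (hβ.hasDerivWithinAt hq.1 ht.1).mono (Ici_subset_Ici.2 ht.1)
  have hdist_zero : dist (β r 0) (β s 0) ≤ dist r s := by
    rw [hβ.apply_zero hr.1, hβ.apply_zero hs.1]
  simpa only [sub_zero] using
    dist_le_of_trajectories_ODE_of_mem (v := fun _ y => -α y) (s := fun _ => Icc 0 R)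
      (fun _ _ => hK.neg)
      ((hβ.continuousOn hr.1).mono Icc_subset_Ici_self) (hderiv r hr)
      (fun _ ht => hβ.mapsTo_Icc ht.1 hr)
      ((hβ.continuousOn hs.1).mono Icc_subset_Ici_self) (hderiv s hs)
      (fun _ ht => hβ.mapsTo_Icc ht.1 hs)
      hdist_zero T (right_mem_Icc.2 hT)

theorem eq_of_apply_eq (hβ : IsBetaFor α β) (hK : LipschitzOnWith K α (Icc 0 R))
    (hr : r ∈ Icc 0 R) (hs : s ∈ Icc 0 R) (hT : 0 ≤ T) (h : β r T = β s T) : r = s := by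
  have hderiv (q : ℝ) (hq : q ∈ Icc 0 R) (t : ℝ) (ht : t ∈ Ioc 0 T) :
      HasDerivWithinAt (β q) (-α (β q t)) (Iic t) t :=
    ((hβ.hasDerivWithinAt hq.1 ht.1.le).hasDerivAt (Ici_mem_nhds ht.1)).hasDerivWithinAt
  have heqOn : EqOn (β r) (β s) (Icc 0 T) :=
    ODE_solution_unique_of_mem_Icc_left (v := fun _ y => -α y) (s := fun _ => Icc 0 R)
      (fun _ _ => hK.neg)
      ((hβ.continuousOn hr.1).mono Icc_subset_Ici_self) (hderiv r hr)
      (fun _ ht => hβ.mapsTo_Icc ht.1.le hr)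
      ((hβ.continuousOn hs.1).mono Icc_subset_Ici_self) (hderiv s hs)
      (fun _ ht => hβ.mapsTo_Icc ht.1.le hs) h
  simpa only [hβ.apply_zero hr.1, hβ.apply_zero hs.1] using heqOn (left_mem_Icc.2 hT)

theorem continuousOn_initial_Icc (hβ : IsBetaFor α β) (hα : LocallyLipschitzOn (Ici 0) α)
    (hT : 0 ≤ T) : ContinuousOn (fun r => β r T) (Icc 0 R) := by
  obtain ⟨K, hK⟩ :=
    (hα.mono Icc_subset_Ici_self).exists_lipschitzOnWith_of_compact (isCompact_Icc (b := R))
  have hlip : LipschitzOnWith (Real.exp (K * T)).toNNReal (fun r => β r T) (Icc 0 R) :=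
    .of_dist_le' fun r hr s hs =>
      (hβ.dist_le_dist_mul_exp hK hr hs hT).trans_eq (mul_comm _ _)
  exact hlip.continuousOn

theorem injOn_initial (hβ : IsBetaFor α β) (hα : LocallyLipschitzOn (Ici 0) α) (hT : 0 ≤ T) :
    InjOn (fun r => β r T) (Ici 0) := by
  intro r hr s hs h
  obtain ⟨K, hK⟩ :=
    (hα.mono Icc_subset_Ici_self).exists_lipschitzOnWith_of_compact
      (isCompact_Icc (b := max r s))
  exact hβ.eq_of_apply_eq hK ⟨hr, le_max_left r s⟩ ⟨hs, le_max_right r s⟩ hT h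

theorem surjOn_initial (hβ : IsBetaFor α β) (hα : LocallyLipschitzOn (Ici 0) α) (hR : 0 ≤ R)
    (hT : 0 ≤ T) : SurjOn (fun r => β r T) (Icc 0 R) (Icc 0 (β R T)) := by
  have hzero : β 0 T = 0 := by simpa using hβ.mem_Icc le_rfl hT
  simpa only [SurjOn, hzero] using intermediate_value_Icc hR (hβ.continuousOn_initial_Icc hα hT)

end IsBetaFor

/-- The anti-discounted payoff of a single curve `ξ`. It is an infimum, because the minimum over
`[0,T]` need not be attained when `g ∘ ξ` is discontinuous. -/
def curvePayoff {X : Type*} (β : ℝ → ℝ → ℝ) (g : X → ℝ) (T : ℝ) (ξ : ℝ → X) : ℝ :=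
  sInf ((fun t => β (g (ξ t)) (T - t)) '' Icc 0 T)

/-- The best payoff over a family `Ξ` of curves, which plays the role of the set of admissible
trajectories. The payoffs lie in `[0,∞)`, where `0`, the value at `Ξ = ∅`, is the supremum of the
empty set. -/
def bestPayoff {X : Type*} (β : ℝ → ℝ → ℝ) (g : X → ℝ) (T : ℝ) (Ξ : Set (ℝ → X)) : ℝ :=
  sSup (curvePayoff β g T '' Ξ)

section Payoff

variable {X : Type*} {α : ℝ → ℝ} {β : ℝ → ℝ → ℝ} {g : X → ℝ} {T : ℝ} {ξ : ℝ → X}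
  {Ξ : Set (ℝ → X)} {x : X}

theorem zero_mem_lowerBounds_beta_image (hβ : IsBetaFor α β) (hg0 : ∀ x, 0 ≤ g x) :
    0 ∈ lowerBounds ((fun t => β (g (ξ t)) (T - t)) '' Icc 0 T) :=
  forall_mem_image.2 fun _ ht => (hβ.mem_Icc (hg0 _) (sub_nonneg.2 ht.2)).1

theorem curvePayoff_nonneg (hβ : IsBetaFor α β) (hg0 : ∀ x, 0 ≤ g x) :
    0 ≤ curvePayoff β g T ξ :=
  Real.sInf_nonneg fun _ hy => zero_mem_lowerBounds_beta_image hβ hg0 hy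

theorem curvePayoff_le_beta_initial (hβ : IsBetaFor α β) (hg0 : ∀ x, 0 ≤ g x) (hT : 0 ≤ T) :
    curvePayoff β g T ξ ≤ β (g (ξ 0)) T :=
  csInf_le ⟨0, zero_mem_lowerBounds_beta_image hβ hg0⟩
    ⟨0, left_mem_Icc.2 hT, by simp only [sub_zero]⟩

theorem bestPayoff_mem_Icc (hβ : IsBetaFor α β) (hg0 : ∀ x, 0 ≤ g x)
    (hΞ : ∀ ξ ∈ Ξ, ξ 0 = x) (hT : 0 ≤ T) : bestPayoff β g T Ξ ∈ Icc 0 (β (g x) T) := by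
  constructor
  · exact Real.sSup_nonneg (forall_mem_image.2 fun _ _ => curvePayoff_nonneg hβ hg0)
  · refine Real.sSup_le (forall_mem_image.2 fun ξ hξ => ?_) (hβ.mem_Icc (hg0 x) hT).1
    exact hΞ ξ hξ ▸ curvePayoff_le_beta_initial hβ hg0 hT

end Payoff

theorem cbvf_well_defined_general {X : Type*} {α : ℝ → ℝ} (hα : LocallyLipschitzOn (Ici 0) α)
    {β : ℝ → ℝ → ℝ} (hβ : IsBetaFor α β) {g : X → ℝ} (hg0 : ∀ x, 0 ≤ g x) {Ξ : Set (ℝ → X)}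
    {x : X} (hΞ : ∀ ξ ∈ Ξ, ξ 0 = x) {T : ℝ} (hT : 0 ≤ T) :
    (0 ≤ bestPayoff β g T Ξ ∧ bestPayoff β g T Ξ ≤ β (g x) T) ∧
    (∃! v : ℝ, 0 ≤ v ∧ β v T = bestPayoff β g T Ξ) ∧
    (∀ v : ℝ, 0 ≤ v → β v T = bestPayoff β g T Ξ → v ∈ Icc 0 (g x)) := by
  have hpayoff := bestPayoff_mem_Icc hβ hg0 hΞ hT
  obtain ⟨w, hw, hw_payoff⟩ := hβ.surjOn_initial hα (hg0 x) hT hpayoff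
  have huniq (v : ℝ) (hv : 0 ≤ v) (hv_payoff : β v T = bestPayoff β g T Ξ) : v = w :=
    hβ.injOn_initial hα hT hv hw.1 (hv_payoff.trans hw_payoff.symm)
  exact ⟨hpayoff, ⟨w, ⟨hw.1, hw_payoff⟩, fun v hv => huniq v hv.1 hv.2⟩,
    fun v hv hv_payoff => huniq v hv hv_payoff ▸ hw⟩

theorem IsTrajectory.apply_zero {n m : ℕ} {f : (Fin n → ℝ) → (Fin m → ℝ) → Fin n → ℝ}
    {x : Fin n → ℝ} {u : ℝ → Fin m → ℝ} {ξ : ℝ → Fin n → ℝ} (hξ : IsTrajectory f x u ξ) :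
    ξ 0 = x := by
  simpa using hξ.2 0 le_rfl

theorem cbvfPayoff_eq_bestPayoff {n m : ℕ}
    (f : (Fin n → ℝ) → (Fin m → ℝ) → Fin n → ℝ) (U : Set (Fin m → ℝ))
    (β : ℝ → ℝ → ℝ) (g : (Fin n → ℝ) → ℝ) (x : Fin n → ℝ) (T : ℝ) :
    cbvfPayoff f U β g x T =
      bestPayoff β g T {ξ | ∃ u, IsControl U u ∧ IsTrajectory f x u ξ} := by
  refine congrArg sSup (Set.ext fun y => ⟨?_, ?_⟩)
  · rintro ⟨u, ξ, hu, hξ, rfl⟩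
    exact ⟨ξ, ⟨u, hu, hξ⟩, rfl⟩
  · rintro ⟨ξ, ⟨u, hu, hξ⟩, rfl⟩
    exact ⟨u, ξ, hu, hξ, rfl⟩

/-- For `S (x,T) = sup_{(u,ξ)} min_{t ∈ [0,T]} β_α (g (ξ t)) (T-t)` one has
`0 ≤ S (x,T) ≤ β_α (g x) T`; there is a unique `v ≥ 0` with `β_α v T = S (x,T)`, and this
`v` lies in `[0, g x]`. -/
theorem cbvf_well_defined {n m : ℕ}
    (f : (Fin n → ℝ) → (Fin m → ℝ) → Fin n → ℝ) (U : Set (Fin m → ℝ))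
    (hU : IsCompact U)
    (hf : ∃ K : NNReal, LipschitzOnWith K (Function.uncurry f) (Set.univ ×ˢ U))
    (α : ℝ → ℝ) (hα : IsLocallyLipschitzClassK α)
    (β : ℝ → ℝ → ℝ) (hβ : IsBetaFor α β)
    (g : (Fin n → ℝ) → ℝ) (hg : Continuous g) (hg0 : ∀ x, 0 ≤ g x) :
    ∀ x : Fin n → ℝ, ∀ T : ℝ, 0 ≤ T →
      (0 ≤ cbvfPayoff f U β g x T ∧ cbvfPayoff f U β g x T ≤ β (g x) T) ∧
      (∃! v : ℝ, 0 ≤ v ∧ β v T = cbvfPayoff f U β g x T) ∧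
      (∀ v : ℝ, 0 ≤ v → β v T = cbvfPayoff f U β g x T → v ∈ Set.Icc 0 (g x)) := by
  intro x T hT
  rw [cbvfPayoff_eq_bestPayoff]
  exact cbvf_well_defined_general hα.2 hβ hg0 (by rintro ξ ⟨u, -, hξ⟩; exact hξ.apply_zero) hT
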